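/- Let H be a finite-dimensional Hopf algebra over an algebraically closed field k, with distinguished character α_H (defined by Λh = ⟨α_H,h⟩Λ for a nonzero left integral Λ ∈ H). Then: (a) the right Nakayama functor of Rep(H) applied to the unit object k gives N(k) = k as a vector space with H-action h ⋆ c = ⟨α_H, h⟩c; (b) the distinguished invertible object of Rep(H) is D = N̄(k) = k with H-action h ⋆̄ c = ⟨α_H, S(h)⟩c, where S is the antipode. -/

import Mathlib

/-!
Write `ε` for the counit, `S` for the antipode and `h₁ ⊗ h₂` for the coproduct.

The form `(a, b) ↦ lam (a * b)` is nondegenerate: its left kernel `K` is a right ideal and, by the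
identity `lam (a₁ b) a₂ = lam (a b₁) S(b₂)`, also a right coideal. For `a ∈ K` this puts
`a₁ S(a₂) = ε(a) 1` in `K`, so `ε` vanishes on `K` because `lam ≠ 0`; then `a = ε(a₁) a₂ = 0`.
The Nakayama automorphism carries this over to the right kernel. In particular `lam Λ ≠ 0`, and
evaluating `lam (Λ b) = lam (ν b Λ)` in two ways gives `ε ∘ ν = α`.

For the second part, put `β = ε ∘ ν⁻¹` and let `Γ` be the element with `lam (Γ b) = ε b`; then
`lam (h Γ) = β h`. The identity above with `a = Γ` reads `S b = lam (Γ₁ b) Γ₂`, so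
`S Λ = lam Λ • Γ`. Applying `S` to `Λ h = α h • Λ` gives `S h * Γ = α h • Γ`, and `lam` of this is `β ∘ S = α`.
Hence `β` is a left convolution inverse of `α`, while `α ∘ S` is a right one, and the two agree.
-/

open CategoryTheory Category MonoidalCategory Limits

noncomputable section

universe w v u v₁ u₁ v₂ u₂ v₃ u₃

namespace Paper

section Cointegral

open TensorProduct WithConv Coalgebra HopfAlgebra

variable {k H : Type*} [Field k] [Ring H] [HopfAlgebra k H]

/-- The identity `lam (a₁ b) a₂ = lam (a b₁) S(b₂)` for a right cointegral `lam`. For fixed `a`,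
the map `Q : b ↦ lam (a₁ b) a₂` satisfies `Q * id = (b ↦ lam (a b) 1)` in the convolution algebra,
and `S` is the convolution inverse of `id`. -/
lemma cointegral_sum_left {lam : H →ₗ[k] k}
    (hcoint : ∀ h : H, (TensorProduct.lid k H)
      ((LinearMap.rTensor H lam) (comul (R := k) h)) = lam h • (1 : H))
    {ι κ : Type*} {a b : H} (ra : Repr k a ι) (rb : Repr k b κ) :
    ∑ i ∈ ra.index, lam (ra.left i * b) • ra.right i =
      ∑ j ∈ rb.index, lam (a * rb.left j) • antipode k (rb.right j) := by
  let Q : H →ₗ[k] H := ∑ i ∈ ra.index,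
    (lam ∘ₗ LinearMap.mulLeft k (ra.left i)).smulRight (ra.right i)
  let L : H →ₗ[k] H := (lam ∘ₗ LinearMap.mulLeft k a).smulRight 1
  have hQL : toConv Q * toConv LinearMap.id = toConv L := by
    ext c
    rw [(ℛ k c).convMul_apply]
    have h := hcoint (a * c)
    rw [← (ra.mul (ℛ k c)).eq] at h
    simp only [Repr.mul_index, Repr.mul_left, Repr.mul_right, map_sum, LinearMap.rTensor_tmul,
      TensorProduct.lid_tmul, Finset.sum_product] at h
    simp only [Q, L, LinearMap.sum_apply, LinearMap.smulRight_apply,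
      LinearMap.comp_apply, LinearMap.mulLeft_apply, LinearMap.id_apply, Finset.sum_mul,
      smul_mul_assoc]
    rw [Finset.sum_comm]
    exact h
  have hQ : toConv Q = toConv L * toConv (antipode k (A := H)) := by
    rw [← hQL, mul_assoc, LinearMap.id_mul_antipode, mul_one]
  have h := congrArg (fun f => f.ofConv b) hQ
  simp only [rb.convMul_apply] at h
  simpa [Q, L] using h

/-- The left kernel of `(a, b) ↦ lam (a * b)` is zero when `lam` is a nonzero right cointegral. -/
lemma cointegral_nondegenerate {lam : H →ₗ[k] k} (hlamne : lam ≠ 0)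
    (hcoint : ∀ h : H, (TensorProduct.lid k H)
      ((LinearMap.rTensor H lam) (comul (R := k) h)) = lam h • (1 : H))
    {a : H} (ha : ∀ b, lam (a * b) = 0) : a = 0 := by
  classical
  let e := Module.Basis.ofVectorSpace k H
  -- The components of the coproduct along a basis of the second factor stay in the left kernel.
  have coideal : ∀ a : H, (∀ b, lam (a * b) = 0) →
      ∃ r : Repr k a (Module.Basis.ofVectorSpaceIndex k H),
        (∀ i b, lam (r.left i * b) = 0) := by
    intro a ha
    obtain ⟨x, hx⟩ := (TensorProduct.equivFinsuppOfBasisRight (M := H) e).symm.surjective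
      (comul (R := k) a)
    rw [TensorProduct.equivFinsuppOfBasisRight_symm_apply] at hx
    let r : Repr k a (Module.Basis.ofVectorSpaceIndex k H) := ⟨x.support, x, e, hx⟩
    refine ⟨r, fun i b => ?_⟩
    have h := cointegral_sum_left hcoint r (ℛ k b)
    simp only [ha, zero_smul, Finset.sum_const_zero] at h
    by_cases hi : i ∈ x.support
    · exact linearIndependent_iff'.1 e.linearIndependent x.support _ h i hi
    · have : x i = 0 := by simpa using hi
      simp [r, this]
  have counit_zero : ∀ a : H, (∀ b, lam (a * b) = 0) → counit (R := k) a = 0 := by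
    intro a ha
    obtain ⟨r, hr⟩ := coideal a ha
    obtain ⟨c, hc⟩ : ∃ c, lam c ≠ 0 := by
      by_contra! h
      exact hlamne (LinearMap.ext h)
    have h := congrArg (fun y => lam (y * c)) (sum_mul_antipode_eq_smul (R := k) r)
    simp only [Finset.sum_mul, mul_assoc, map_sum, hr, Finset.sum_const_zero, smul_mul_assoc,
      one_mul, map_smul, smul_eq_mul] at h
    exact (mul_eq_zero.1 h.symm).resolve_right hc
  obtain ⟨r, hr⟩ := coideal a ha
  rw [← sum_counit_smul r]
  exact Finset.sum_eq_zero fun i _ => by rw [counit_zero _ (hr i), zero_smul]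

/-- If `β ∘ S = α` for characters `α`, `β`, then `β = α ∘ S`: both are convolution inverses
of `α`. -/
lemma character_eq_comp_antipode (α β : H →ₐ[k] k)
    (h : ∀ x, β (antipode k x) = α x) (x : H) : β x = α (antipode k x) := by
  have key : ∀ γ : H →ₐ[k] k,
      toConv γ.toLinearMap * toConv (γ.toLinearMap ∘ₗ antipode k) = 1 := by
    intro γ
    ext c
    rw [(ℛ k c).convMul_apply]
    have := congrArg γ (sum_mul_antipode_eq_smul (R := k) (ℛ k c))
    simpa using this
  have hβ : β.toLinearMap ∘ₗ antipode k = α.toLinearMap := LinearMap.ext h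
  have h1 := key β
  rw [hβ] at h1
  exact congrArg (fun f => f.ofConv x) (left_inv_eq_right_inv h1 (key α))

end Cointegral

open TensorProduct in
/-- **Statement 15.** Let `H` be a finite-dimensional Hopf algebra over an algebraically closed
field `k`, with distinguished character `α` (defined by `Λ * h = α h • Λ` for a nonzero left
integral `Λ`).  The right Nakayama functor of `Rep H` is twisting by the Nakayama automorphism
`ν` of the Frobenius form (a right cointegral `lam`), and its quasi-inverse is twisting by
`ν⁻¹`.  Then:
(a) `N(k) = k` with `H`-action `h ⋆ c = α h • c`, i.e. `ε ∘ ν = α`; and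
(b) the distinguished invertible object is `D = N̄(k) = k` with action
`h ⋆̄ c = α (S h) • c`, i.e. `ε ∘ ν⁻¹ = α ∘ S`. -/
theorem nakayama_unit_action_eq_distinguished_character
    {k H : Type u} [Field k] [IsAlgClosed k] [Ring H] [HopfAlgebra k H] [FiniteDimensional k H]
    -- a nonzero left integral and the distinguished character
    (Λ : H) (hΛne : Λ ≠ 0)
    (hΛ : ∀ h : H, h * Λ = (Coalgebra.counit (R := k) h) • Λ)
    (α : H →ₐ[k] k) (hα : ∀ h : H, Λ * h = α h • Λ)
    -- a right cointegral, which is a Frobenius form for `H`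
    (lam : H →ₗ[k] k) (hlamne : lam ≠ 0)
    (hcoint : ∀ h : H,
      (TensorProduct.lid k H) ((LinearMap.rTensor H lam) (Coalgebra.comul (R := k) h))
        = lam h • (1 : H))
    -- the Nakayama automorphism of `H` with respect to `lam`
    (ν : H ≃ₐ[k] H) (hν : ∀ a b : H, lam (a * b) = lam (ν b * a)) :
    (∀ h : H, Coalgebra.counit (R := k) (ν h) = α h) ∧
    (∀ h : H, Coalgebra.counit (R := k) (ν.symm h)
        = α (HopfAlgebra.antipode (R := k) h)) := by
  have nd : ∀ a : H, (∀ b, lam (a * b) = 0) → a = 0 := fun a ha =>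
    cointegral_nondegenerate hlamne hcoint ha
  have hlamΛ : lam Λ ≠ 0 := by
    intro h0
    refine hΛne (ν.injective ?_)
    rw [map_zero]
    refine nd _ fun b => ?_
    rw [← hν, hΛ, map_smul, h0, smul_zero]
  refine ⟨fun h => ?_, ?_⟩
  · have h1 := hν Λ h
    rw [hα, hΛ, map_smul, map_smul, smul_eq_mul, smul_eq_mul] at h1
    exact (mul_right_cancel₀ hlamΛ h1).symm
  -- `Γ` is the element representing the counit through the nondegenerate form.
  obtain ⟨Γ, hΓ⟩ : ∃ Γ : H, ∀ b, lam (Γ * b) = Coalgebra.counit (R := k) b := by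
    let φ : H →ₗ[k] Module.Dual k H := (LinearMap.mul k H).compr₂ lam
    have hinj : Function.Injective φ := by
      refine (injective_iff_map_eq_zero φ).2 fun a ha => nd a fun b => ?_
      exact congrArg (fun f : Module.Dual k H => f b) ha
    obtain ⟨Γ, hΓ⟩ := (LinearMap.injective_iff_surjective_of_finrank_eq_finrank
      (Subspace.dual_finrank_eq (K := k) (V := H)).symm).1 hinj (Coalgebra.counit (R := k))
    exact ⟨Γ, fun b => congrArg (fun f : Module.Dual k H => f b) hΓ⟩
  let β : H →ₐ[k] k := (Bialgebra.counitAlgHom k H).comp ν.symm.toAlgHom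
  have hβ : ∀ h, β h = Coalgebra.counit (R := k) (ν.symm h) := fun h => rfl
  have hβΓ : ∀ h, lam (h * Γ) = β h := by
    intro h
    have h1 := hν Γ (ν.symm h)
    rw [AlgEquiv.apply_symm_apply, hΓ] at h1
    rw [hβ, h1]
  have hSΛ : HopfAlgebra.antipode k Λ = lam Λ • Γ := by
    let r := Coalgebra.Repr.arbitrary k Γ
    let s := Coalgebra.Repr.arbitrary k Λ
    have h1 := cointegral_sum_left hcoint r s
    simp only [hΛ, hΓ, map_smul, smul_eq_mul] at h1
    simp only [mul_comm _ (lam Λ), mul_smul, ← map_smul] at h1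
    rw [← Finset.smul_sum, Coalgebra.sum_counit_smul r, ← map_sum,
      Coalgebra.sum_counit_smul s] at h1
    exact h1.symm
  have hβS : ∀ h, β (HopfAlgebra.antipode k h) = α h := by
    intro h
    have h1 := congrArg (HopfAlgebra.antipode k) (hα h)
    rw [HopfAlgebra.antipode_mul_antidistrib, map_smul, hSΛ] at h1
    have h2 := congrArg lam h1
    have hΓ1 : lam Γ = 1 := by simpa using hΓ 1
    simp only [mul_smul_comm, map_smul, smul_eq_mul, hβΓ, hΓ1, mul_one] at h2
    rw [mul_comm] at h2
    exact mul_right_cancel₀ hlamΛ h2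
  exact fun h => character_eq_comp_antipode α β hβS h

end Paper
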